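/- Let Γ ⊆ E be a linear subspace and X, Y ∈ Γ. Suppose 0 ≤ δ < 1, the upper RIP with constant δ holds at every Z ∈ Γ (i.e. (1/m)·Σ_{i=1}^{m} ⟨A_i, Z⟩² ≤ (1+δ)·‖Z‖² for all Z ∈ Γ), the lower RIP with constant δ holds at X − Y (i.e. (1−δ)·‖X−Y‖² ≤ (1/m)·Σ_{i=1}^{m} ⟨A_i, X−Y⟩²), and 0 ≤ η ≤ 1/(1+δ). Then ‖X − Y − η·P_Γ(∇F(X) − ∇F(Y))‖² ≤ (1 + η²·δ⁺·δ⁻ − 2η·δ⁻)·‖X − Y‖², where δ⁻ = 2(1−δ) and δ⁺ = 2(1+δ). -/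

import Mathlib

open RealInnerProductSpace

/-!
The difference `∇F(X) - ∇F(Y)` is `T (X - Y)`, where `T` is `2/m` times the frame operator
`x ↦ ∑ i, ⟪A i, x⟫ • A i`. The compression of the positive operator `T` to `Γ` is again positive,
and the upper RIP bounds its quadratic form by `L = δ⁺`. A positive operator `T` with
`⟪T x, x⟫ ≤ L ‖x‖²` is cocoercive, `‖T x‖² ≤ L ⟪T x, x⟫`, so that
`‖x - η • T x‖² ≤ ‖x‖² - η (2 - η L) ⟪T x, x⟫`. Since `η L ≤ 2`, the lower RIP at `x = X - Y`
gives the claim.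
-/

section

open RCLike InnerProductSpace

variable {𝕜 E ι : Type*} [RCLike 𝕜] [NormedAddCommGroup E] [InnerProductSpace 𝕜 E]

section IsPositive

variable {T : E →ₗ[𝕜] E} {L μ t : ℝ} {x : E}

lemma re_inner_map_sub_smul_map_self_of_isSymmetric (hT : T.IsSymmetric) (x : E) (t : ℝ) :
    re ⟪T (x - (t : 𝕜) • T x), x - (t : 𝕜) • T x⟫_𝕜 =
      t ^ 2 * re ⟪T (T x), T x⟫_𝕜 - 2 * t * ‖T x‖ ^ 2 + re ⟪T x, x⟫_𝕜 := by
  have hcross : ⟪T (T x), x⟫_𝕜 = ⟪T x, T x⟫_𝕜 := hT (T x) x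
  simp only [map_sub, map_smul, inner_sub_left, inner_sub_right, inner_smul_left, inner_smul_right,
    conj_ofReal, re_ofReal_mul, hcross, inner_self_eq_norm_sq]
  ring

lemma sq_norm_map_le_of_isPositive (hT : T.IsPositive)
    (hL : ∀ x, re ⟪T x, x⟫_𝕜 ≤ L * ‖x‖ ^ 2) (x : E) :
    ‖T x‖ ^ 2 ≤ L * re ⟪T x, x⟫_𝕜 := by
  have hquadratic (t : ℝ) :
      0 ≤ L * ‖T x‖ ^ 2 * (t * t) + -2 * ‖T x‖ ^ 2 * t + re ⟪T x, x⟫_𝕜 :=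
    calc
      0 ≤ re ⟪T (x - (t : 𝕜) • T x), x - (t : 𝕜) • T x⟫_𝕜 := hT.re_inner_nonneg_left _
      _ = t ^ 2 * re ⟪T (T x), T x⟫_𝕜 - 2 * t * ‖T x‖ ^ 2 + re ⟪T x, x⟫_𝕜 :=
        re_inner_map_sub_smul_map_self_of_isSymmetric hT.isSymmetric x t
      _ ≤ t ^ 2 * (L * ‖T x‖ ^ 2) - 2 * t * ‖T x‖ ^ 2 + re ⟪T x, x⟫_𝕜 := by
        gcongr
        exact hL (T x)
      _ = L * ‖T x‖ ^ 2 * (t * t) + -2 * ‖T x‖ ^ 2 * t + re ⟪T x, x⟫_𝕜 := by ring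
  have hmul : ‖T x‖ ^ 2 * ‖T x‖ ^ 2 ≤ ‖T x‖ ^ 2 * (L * re ⟪T x, x⟫_𝕜) := by
    have hdiscrim := discrim_le_zero hquadratic
    rw [discrim] at hdiscrim
    linarith
  rcases eq_or_ne (T x) 0 with hTx | hTx
  · simp [hTx]
  · exact le_of_mul_le_mul_left hmul (by positivity)

lemma sq_norm_sub_smul_map_le_of_isPositive (hT : T.IsPositive)
    (hL : ∀ x, re ⟪T x, x⟫_𝕜 ≤ L * ‖x‖ ^ 2) (hμ : μ * ‖x‖ ^ 2 ≤ re ⟪T x, x⟫_𝕜)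
    (ht : 0 ≤ t) (htL : t * L ≤ 2) :
    ‖x - (t : 𝕜) • T x‖ ^ 2 ≤ (1 + t ^ 2 * L * μ - 2 * t * μ) * ‖x‖ ^ 2 := by
  have hstep : 0 ≤ t * (2 - t * L) := mul_nonneg ht (sub_nonneg.2 htL)
  calc
    ‖x - (t : 𝕜) • T x‖ ^ 2 = ‖x‖ ^ 2 - 2 * t * re ⟪T x, x⟫_𝕜 + t ^ 2 * ‖T x‖ ^ 2 := by
      rw [norm_sub_sq (𝕜 := 𝕜), inner_smul_right, re_ofReal_mul, inner_re_symm, norm_smul,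
        norm_ofReal, mul_pow, sq_abs]
      ring
    _ ≤ ‖x‖ ^ 2 - 2 * t * re ⟪T x, x⟫_𝕜 + t ^ 2 * (L * re ⟪T x, x⟫_𝕜) := by
      gcongr
      exact sq_norm_map_le_of_isPositive hT hL x
    _ = ‖x‖ ^ 2 - t * (2 - t * L) * re ⟪T x, x⟫_𝕜 := by ring
    _ ≤ ‖x‖ ^ 2 - t * (2 - t * L) * (μ * ‖x‖ ^ 2) :=
      sub_le_sub_left (mul_le_mul_of_nonneg_left hμ hstep) _
    _ = (1 + t ^ 2 * L * μ - 2 * t * μ) * ‖x‖ ^ 2 := by ring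

end IsPositive

lemma sq_norm_sub_smul_orthogonalProjectionOnto_map_le_of_isPositive {T : E →L[𝕜] E} {L μ t : ℝ}
    {x : E} (Γ : Submodule 𝕜 E) [Γ.HasOrthogonalProjection] (hT : T.IsPositive)
    (hL : ∀ z ∈ Γ, re ⟪T z, z⟫_𝕜 ≤ L * ‖z‖ ^ 2) (hx : x ∈ Γ)
    (hμ : μ * ‖x‖ ^ 2 ≤ re ⟪T x, x⟫_𝕜) (ht : 0 ≤ t) (htL : t * L ≤ 2) :
    ‖x - (t : 𝕜) • (Γ.orthogonalProjectionOnto (T x) : E)‖ ^ 2 ≤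
      (1 + t ^ 2 * L * μ - 2 * t * μ) * ‖x‖ ^ 2 := by
  have hcompression (z : Γ) : ⟪Γ.orthogonalProjectionOnto (T z), z⟫_𝕜 = ⟪T z, z⟫_𝕜 :=
    Γ.inner_orthogonalProjectionOnto_eq_of_mem_right z (T z)
  refine sq_norm_sub_smul_map_le_of_isPositive (x := (⟨x, hx⟩ : Γ))
    (hT.orthogonalProjectionOnto_comp Γ).toLinearMap (fun z ↦ ?_) ?_ ht htL
  · exact (congrArg re (hcompression z)).trans_le (hL z z.2)
  · exact hμ.trans_eq (congrArg re (hcompression ⟨x, hx⟩)).symm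

section frameOperator

variable (𝕜) in
/-- The frame operator `x ↦ ∑ i ∈ s, ⟪A i, x⟫ • A i` of a finite family of vectors, i.e. `𝒜* 𝒜` for
the measurement map `𝒜 x = (⟪A i, x⟫)ᵢ`. It is half the Hessian of the sum of squared residuals
`X ↦ ∑ i ∈ s, ‖y i - ⟪A i, X⟫‖ ^ 2`. -/
noncomputable def frameOperator (s : Finset ι) (A : ι → E) : E →L[𝕜] E :=
  ∑ i ∈ s, rankOne 𝕜 (A i) (A i)

variable (s : Finset ι) (A : ι → E)

lemma frameOperator_apply (x : E) : frameOperator 𝕜 s A x = ∑ i ∈ s, ⟪A i, x⟫_𝕜 • A i := by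
  simp [frameOperator]

lemma isPositive_frameOperator : (frameOperator 𝕜 s A).IsPositive :=
  ContinuousLinearMap.isPositive_sum s fun i _ ↦ isPositive_rankOne_self (A i)

lemma re_inner_frameOperator_self (x : E) :
    re ⟪frameOperator 𝕜 s A x, x⟫_𝕜 = ∑ i ∈ s, ‖⟪A i, x⟫_𝕜‖ ^ 2 := by
  simp only [frameOperator_apply, sum_inner, inner_smul_left, RCLike.conj_mul, map_sum]
  norm_cast

lemma sum_residual_smul_sub_sum_residual_smul (y : ι → 𝕜) (X Y : E) :
    ∑ i ∈ s, (⟪A i, X⟫_𝕜 - y i) • A i - ∑ i ∈ s, (⟪A i, Y⟫_𝕜 - y i) • A i =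
      frameOperator 𝕜 s A (X - Y) := by
  simp only [frameOperator_apply, ← Finset.sum_sub_distrib, ← sub_smul, sub_sub_sub_cancel_right,
    inner_sub_right]

end frameOperator

theorem stmt_8_general (s : Finset ι) (A : ι → E) (y : ι → 𝕜) {c α β η : ℝ} (hc : 0 ≤ c)
    (hη : 0 ≤ η) (hηβ : η * β ≤ 1) (gradF : E → E)
    (hgradF : ∀ Z, gradF Z = ((2 * c : ℝ) : 𝕜) • ∑ i ∈ s, (⟪A i, Z⟫_𝕜 - y i) • A i)
    (Γ : Submodule 𝕜 E) [Γ.HasOrthogonalProjection] {X Y : E} (hX : X ∈ Γ) (hY : Y ∈ Γ)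
    (hupper : ∀ Z ∈ Γ, c * ∑ i ∈ s, ‖⟪A i, Z⟫_𝕜‖ ^ 2 ≤ β * ‖Z‖ ^ 2)
    (hlower : α * ‖X - Y‖ ^ 2 ≤ c * ∑ i ∈ s, ‖⟪A i, X - Y⟫_𝕜‖ ^ 2) :
    ‖X - Y - (η : 𝕜) • (Γ.orthogonalProjectionOnto (gradF X - gradF Y) : E)‖ ^ 2 ≤
      (1 + η ^ 2 * (2 * β) * (2 * α) - 2 * η * (2 * α)) * ‖X - Y‖ ^ 2 := by
  let T : E →L[𝕜] E := ((2 * c : ℝ) : 𝕜) • frameOperator 𝕜 s A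
  have hT : T.IsPositive :=
    (isPositive_frameOperator s A).smul_of_nonneg (ofReal_nonneg.2 (by positivity))
  have hgrad_sub : gradF X - gradF Y = T (X - Y) := by
    rw [hgradF, hgradF, ← smul_sub, sum_residual_smul_sub_sum_residual_smul]
    rfl
  have hform (Z : E) : re ⟪T Z, Z⟫_𝕜 = 2 * (c * ∑ i ∈ s, ‖⟪A i, Z⟫_𝕜‖ ^ 2) := by
    rw [smul_apply, inner_smul_left, conj_ofReal, re_ofReal_mul,
      re_inner_frameOperator_self, mul_assoc]
  rw [hgrad_sub]
  refine sq_norm_sub_smul_orthogonalProjectionOnto_map_le_of_isPositive Γ hT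
    (fun Z hZ ↦ ?_) (Γ.sub_mem hX hY) ?_ hη (by linarith)
  · linarith [hform Z, hupper Z hZ]
  · linarith [hform (X - Y)]

end

/-- For `X, Y` in a subspace `Γ` on which the upper RIP with constant `0 ≤ δ < 1` holds,
if the lower RIP holds at `X - Y` and `0 ≤ η ≤ 1/(1+δ)`, then
`‖X - Y - η P_Γ(∇F(X) - ∇F(Y))‖² ≤ (1 + η²δ⁺δ⁻ - 2ηδ⁻)‖X - Y‖²`,
where `δ⁻ = 2(1-δ)` and `δ⁺ = 2(1+δ)`. -/
theorem stmt_8 {E : Type*} [NormedAddCommGroup E] [InnerProductSpace ℝ E]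
    [FiniteDimensional ℝ E]
    (m : ℕ) (A : ℕ → E) (y : ℕ → ℝ) (δ η : ℝ)
    (hδ0 : 0 ≤ δ) (hδ1 : δ < 1) (hη0 : 0 ≤ η) (hη1 : η ≤ 1 / (1 + δ))
    (gradF : E → E)
    (hgradF : ∀ Z : E, gradF Z =
      ((2 : ℝ) / (m : ℝ)) • ∑ i ∈ Finset.Icc 1 m, (⟪A i, Z⟫ - y i) • A i)
    (Γ : Submodule ℝ E) (X Y : E) (hX : X ∈ Γ) (hY : Y ∈ Γ)
    (hupper : ∀ Z ∈ Γ,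
      (1 / (m : ℝ)) * ∑ i ∈ Finset.Icc 1 m, ⟪A i, Z⟫ ^ 2 ≤ (1 + δ) * ‖Z‖ ^ 2)
    (hlower : (1 - δ) * ‖X - Y‖ ^ 2 ≤
      (1 / (m : ℝ)) * ∑ i ∈ Finset.Icc 1 m, ⟪A i, X - Y⟫ ^ 2)
    (δm δp : ℝ) (hδm : δm = 2 * (1 - δ)) (hδp : δp = 2 * (1 + δ)) :
    ‖X - Y - η • (Submodule.orthogonalProjectionOnto Γ (gradF X - gradF Y) : E)‖ ^ 2 ≤
      (1 + η ^ 2 * δp * δm - 2 * η * δm) * ‖X - Y‖ ^ 2 := by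
  subst hδm hδp
  simpa using stmt_8_general (c := 1 / m) (α := 1 - δ) (β := 1 + δ) (Finset.Icc 1 m) A y
    (by positivity) hη0 ((le_div_iff₀ (by linarith)).1 hη1) gradF
    (fun Z ↦ by simp [hgradF, div_eq_mul_inv]) Γ hX hY
    (by simpa using hupper) (by simpa using hlower)
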